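/- Fourth-order consistency with optimal shape parameter (scalar Gaussian case): let L ∈ ℝ, u(t) = e^{Lt}u₀ with u₀ ≠ 0, and choose ε² = −L²/6 (so ε²u = −(1/6)u''). With a = (e^{ε²Δt²} − 1)/(2ε²Δt) (interpreted by continuity when ε = 0), the truncation error τ = ((1 − aL)u(t+Δt) − (1 + aL)u(t))/Δt satisfies τ = O(Δt⁴) as Δt → 0. -/

import Mathlib

/-!
Write `x = L Δt` and `b = a L`. The truncation error is `e^{Lt} u₀ / Δt` times the defect
`(1 - b) eˣ - (1 + b) = (eˣ + 1) (tanh (x / 2) - b)`, so the scheme is as accurate as `b` is an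
approximation of `tanh (x / 2) = x / 2 - x³ / 24 + O(x⁵)`. Expanding the Gaussian weight gives
`a = Δt / 2 + ε² Δt³ / 4 + O(Δt⁵)`, and `ε² = -L² / 6` makes the cubic terms agree.
-/

open Asymptotics Filter Finset NormedSpace Topology

theorem exists_forall_norm_le_of_isBigO_nhdsNE {α E F : Type*} [PseudoMetricSpace α] [Norm E]
    [SeminormedAddCommGroup F] {f : α → E} {g : α → F} {x₀ : α} (hfg : f =O[𝓝[≠] x₀] g) :
    ∃ C δ : ℝ, 0 < C ∧ 0 < δ ∧ ∀ x, x ≠ x₀ → dist x x₀ < δ → ‖f x‖ ≤ C * ‖g x‖ := by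
  obtain ⟨C, hC, hbound⟩ := hfg.exists_pos
  obtain ⟨δ, hδ, hball⟩ :=
    Metric.eventually_nhds_iff.mp (eventually_nhdsWithin_iff.mp hbound.bound)
  exact ⟨C, δ, hC, hδ, fun x hne hdist ↦ hball hdist hne⟩

theorem hasFPowerSeriesAt_sub_sum_coeff_isBigO {𝕜 E : Type*} [NontriviallyNormedField 𝕜]
    [NormedAddCommGroup E] [NormedSpace 𝕜 E] {f : 𝕜 → E} {p : FormalMultilinearSeries 𝕜 𝕜 E}
    {x : 𝕜} (hf : HasFPowerSeriesAt f p x) (n : ℕ) :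
    (fun z ↦ f (x + z) - ∑ i ∈ range n, z ^ i • p.coeff i) =O[𝓝 0] (· ^ n) := by
  simpa [FormalMultilinearSeries.partialSum, ← norm_pow, isBigO_norm_right] using
    hf.isBigO_sub_partialSum_pow n

section RCLike

variable {𝕜 : Type*} [RCLike 𝕜]

theorem coeff_expSeries (n : ℕ) : (expSeries 𝕜 𝕜).coeff n = (n.factorial : 𝕜)⁻¹ := by
  simp [expSeries_eq_ofScalars]

theorem exp_sub_sum_isBigO (n : ℕ) :
    (fun z : 𝕜 ↦ exp z - ∑ i ∈ range n, z ^ i / i.factorial) =O[𝓝 0] (· ^ n) := by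
  simpa only [zero_add, smul_eq_mul, coeff_expSeries, ← div_eq_mul_inv] using
    hasFPowerSeriesAt_sub_sum_coeff_isBigO (exp_hasFPowerSeriesAt_zero (𝕂 := 𝕜) (𝔸 := 𝕜)) n

theorem dslope_exp_zero_sub_sum_isBigO (n : ℕ) :
    (fun z : 𝕜 ↦ dslope exp 0 z - ∑ i ∈ range n, z ^ i / (i + 1).factorial) =O[𝓝 0] (· ^ n) := by
  simpa only [zero_add, smul_eq_mul, FormalMultilinearSeries.coeff_fslope, coeff_expSeries,
    ← div_eq_mul_inv] using
    hasFPowerSeriesAt_sub_sum_coeff_isBigO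
      (exp_hasFPowerSeriesAt_zero (𝕂 := 𝕜) (𝔸 := 𝕜)).has_fpower_series_dslope_fslope n

/-- The weight `a = (exp (c h²) - 1) / (2 c h)` of the Gaussian trapezoidal scheme with step `h` and
squared shape parameter `c = ε²`. It is encoded through the entire function `(exp z - 1) / z`, so
that its values at `c = 0` and at `h = 0` are the limits. -/
noncomputable def gaussianWeight (c h : 𝕜) : 𝕜 :=
  h / 2 * dslope exp 0 (c * h ^ 2)

theorem gaussianWeight_of_ne_zero {c h : 𝕜} (hc : c ≠ 0) (hh : h ≠ 0) :
    gaussianWeight c h = (exp (c * h ^ 2) - 1) / (2 * c * h) := by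
  have hch : c * h ^ 2 ≠ 0 := mul_ne_zero hc (pow_ne_zero 2 hh)
  rw [gaussianWeight, dslope_of_ne _ hch, slope_def_field, exp_zero, sub_zero]
  field_simp

theorem gaussianWeight_zero_left (h : 𝕜) : gaussianWeight 0 h = h / 2 := by
  rw [gaussianWeight, zero_mul, dslope_same, hasDerivAt_exp_zero.deriv, mul_one]

theorem gaussianWeight_sq_mul_mul (k c h : 𝕜) :
    gaussianWeight (k ^ 2 * c) h * k = gaussianWeight c (k * h) := by
  rw [gaussianWeight, gaussianWeight, show k ^ 2 * c * h ^ 2 = c * (k * h) ^ 2 by ring]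
  ring

theorem gaussianWeight_sub_isBigO (c : 𝕜) :
    (fun h ↦ gaussianWeight c h - (h / 2 + c * h ^ 3 / 4)) =O[𝓝 0] (· ^ 5) := by
  have hsq : Tendsto (fun h : 𝕜 ↦ c * h ^ 2) (𝓝 0) (𝓝 0) :=
    Continuous.tendsto' (by fun_prop) 0 0 (by simp)
  have hquot : (fun h : 𝕜 ↦ dslope exp 0 (c * h ^ 2) - (1 + c * h ^ 2 / 2)) =O[𝓝 0] (· ^ 4) := by
    have htaylor := (dslope_exp_zero_sub_sum_isBigO (𝕜 := 𝕜) 2).comp_tendsto hsq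
    refine (htaylor.congr_left fun h ↦ ?_).trans ?_
    · simp [sum_range_succ]
    · exact (isBigO_const_mul_self (c ^ 2) (· ^ 4) _).congr_left fun h ↦ by
        simp only [Function.comp_apply]; ring
  refine ((isBigO_const_mul_self (1 / 2 : 𝕜) id (𝓝 0)).mul hquot).congr (fun h ↦ ?_) fun h ↦ ?_
  · simp only [gaussianWeight, id]; ring
  · simp only [id]; ring

/-- The amount by which `y' = y` with step `x` fails to be solved exactly by the one-step scheme
`(1 - b) yₙ₊₁ = (1 + b) yₙ`, for the exact solution started at `1`. -/
noncomputable def trapezoidalDefect (b x : 𝕜) : 𝕜 :=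
  (1 - b) * exp x - (1 + b)

theorem trapezoidalDefect_cubic_isBigO :
    (fun x : 𝕜 ↦ trapezoidalDefect (x / 2 - x ^ 3 / 24) x) =O[𝓝 0] (· ^ 5) := by
  have hexp : (fun x : 𝕜 ↦ exp x - (1 + x + x ^ 2 / 2 + x ^ 3 / 6 + x ^ 4 / 24)) =O[𝓝 0] (· ^ 5) :=
    (exp_sub_sum_isBigO 5).congr_left fun x ↦ by simp [sum_range_succ, Nat.factorial]
  have hbounded : (fun x : 𝕜 ↦ 1 - (x / 2 - x ^ 3 / 24)) =O[𝓝 0] (fun _ ↦ (1 : 𝕜)) :=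
    (Continuous.tendsto (by fun_prop) 0).isBigO_one 𝕜
  -- `(x / 144 + x² / 576) x⁵` is the defect left when `exp x` is replaced by its Taylor polynomial.
  have hrest : (fun x : 𝕜 ↦ x / 144 + x ^ 2 / 576) =O[𝓝 0] (fun _ ↦ (1 : 𝕜)) :=
    (Continuous.tendsto (by fun_prop) 0).isBigO_one 𝕜
  have hmul_exp : (fun x : 𝕜 ↦ (1 - (x / 2 - x ^ 3 / 24)) *
      (exp x - (1 + x + x ^ 2 / 2 + x ^ 3 / 6 + x ^ 4 / 24))) =O[𝓝 0] (· ^ 5) := by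
    simpa only [one_mul] using hbounded.mul hexp
  have hmul_pow : (fun x : 𝕜 ↦ (x / 144 + x ^ 2 / 576) * x ^ 5) =O[𝓝 0] (· ^ 5) := by
    simpa only [one_mul] using hrest.mul (isBigO_refl (· ^ 5) (𝓝 0))
  refine (hmul_exp.add hmul_pow).congr_left fun x ↦ ?_
  rw [trapezoidalDefect]
  ring

theorem trapezoidalDefect_isBigO {b : 𝕜 → 𝕜}
    (hb : (fun x ↦ b x - (x / 2 - x ^ 3 / 24)) =O[𝓝 0] (· ^ 5)) :
    (fun x ↦ trapezoidalDefect (b x) x) =O[𝓝 0] (· ^ 5) := by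
  have hbounded : (fun x : 𝕜 ↦ exp x + 1) =O[𝓝 0] (fun _ ↦ (1 : 𝕜)) :=
    ((exp_continuous.add continuous_const).tendsto 0).isBigO_one 𝕜
  have hperturb : (fun x ↦ (exp x + 1) * (b x - (x / 2 - x ^ 3 / 24))) =O[𝓝 0] (· ^ 5) := by
    simpa only [one_mul] using hbounded.mul hb
  refine (trapezoidalDefect_cubic_isBigO.sub hperturb).congr_left fun x ↦ ?_
  simp only [trapezoidalDefect]
  ring

theorem trapezoidalDefect_gaussianWeight_isBigO :
    (fun x : 𝕜 ↦ trapezoidalDefect (gaussianWeight (-1 / 6) x) x) =O[𝓝 0] (· ^ 5) :=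
  trapezoidalDefect_isBigO <| (gaussianWeight_sub_isBigO (-1 / 6)).congr_left fun x ↦ by ring

/-- The truncation error `τ` at time `t` of the scheme `(1 - a L) uₙ₊₁ = (1 + a L) uₙ` with step `h`
for `u' = L u`, along the function `u`. -/
noncomputable def truncationError (L a : 𝕜) (u : 𝕜 → 𝕜) (t h : 𝕜) : 𝕜 :=
  ((1 - a * L) * u (t + h) - (1 + a * L) * u t) / h

theorem truncationError_exp (L a u₀ t h : 𝕜) :
    truncationError L a (fun s ↦ exp (L * s) * u₀) t h =
      exp (L * t) * u₀ * (trapezoidalDefect (a * L) (L * h) / h) := by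
  rw [truncationError, trapezoidalDefect, mul_add, exp_add]
  ring

theorem gaussian_fourth_order_consistency_general (L u₀ t : 𝕜) :
    (fun h ↦ truncationError L (gaussianWeight (-L ^ 2 / 6) h) (fun s ↦ exp (L * s) * u₀) t h)
      =O[𝓝[≠] 0] (· ^ 4) := by
  have hLh : Tendsto (fun h ↦ L * h) (𝓝[≠] 0) (𝓝 0) :=
    (Continuous.tendsto' (by fun_prop) 0 0 (mul_zero L)).mono_left nhdsWithin_le_nhds
  have hscale (h : 𝕜) : gaussianWeight (-L ^ 2 / 6) h * L = gaussianWeight (-1 / 6) (L * h) := by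
    rw [← gaussianWeight_sq_mul_mul, show L ^ 2 * (-1 / 6) = -L ^ 2 / 6 by ring]
  have hdefect : (fun h ↦ trapezoidalDefect (gaussianWeight (-L ^ 2 / 6) h * L) (L * h))
      =O[𝓝[≠] 0] (· ^ 5) := by
    simp only [hscale]
    refine (trapezoidalDefect_gaussianWeight_isBigO.comp_tendsto hLh).trans ?_
    exact (isBigO_const_mul_self (L ^ 5) (· ^ 5) _).congr_left fun h ↦ (mul_pow L h 5).symm
  have hquot : (fun h ↦ trapezoidalDefect (gaussianWeight (-L ^ 2 / 6) h * L) (L * h) / h)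
      =O[𝓝[≠] 0] (· ^ 4) := by
    refine (hdefect.mul (isBigO_refl (·⁻¹) _)).congr' (.of_forall fun h ↦ ?_) ?_
    · exact (div_eq_mul_inv _ _).symm
    · filter_upwards [self_mem_nhdsWithin] with h hh
      rw [pow_succ, mul_inv_cancel_right₀ hh]
  simpa only [truncationError_exp] using hquot.const_mul_left (exp (L * t) * u₀)

end RCLike

theorem gaussian_fourth_order_consistency (L u₀ t : ℝ) (hu₀ : u₀ ≠ 0) (ht : 0 ≤ t) :
    ∃ C δ : ℝ, 0 < C ∧ 0 < δ ∧ ∀ Δt : ℝ, 0 < Δt → Δt < δ →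
      ∀ a : ℝ,
        (if L = 0 then a = Δt / 2
          else a = (Real.exp (-L ^ 2 / 6 * Δt ^ 2) - 1) / (2 * (-L ^ 2 / 6) * Δt)) →
        |((1 - a * L) * (Real.exp (L * (t + Δt)) * u₀) -
              (1 + a * L) * (Real.exp (L * t) * u₀)) / Δt| ≤ C * Δt ^ 4 := by
  obtain ⟨C, δ, hC, hδ, hbound⟩ :=
    exists_forall_norm_le_of_isBigO_nhdsNE (gaussian_fourth_order_consistency_general L u₀ t)
  refine ⟨C, δ, hC, hδ, fun Δt hpos hlt a ha ↦ ?_⟩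
  have hweight : a = gaussianWeight (-L ^ 2 / 6) Δt := by
    split_ifs at ha with hL
    · simpa [hL, gaussianWeight_zero_left] using ha
    · rw [ha, gaussianWeight_of_ne_zero (by simpa using hL) hpos.ne', Real.exp_eq_exp_ℝ]
  simpa [truncationError, ← hweight, Real.exp_eq_exp_ℝ, abs_div, abs_of_pos hpos] using
    hbound Δt hpos.ne' (by simpa [abs_of_pos hpos] using hlt)
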